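/- Let α be a factor of ω with |α| ≥ 2 and fix n ≥ 0. Suppose α = γ_0 i_1^{(n)} ⋯ i_k^{(n)} γ_1 and α = γ_0' j_1^{(n)} ⋯ j_l^{(n)} γ_1', where 2 ≤ k ≤ 4, 2 ≤ l ≤ 4, i_1,…,i_k, j_1,…,j_l ∈ {0,1}, γ_0 and γ_0' are suffixes of 0^{(n)} or of 1^{(n)} of length < 2^n, and γ_1 and γ_1' are prefixes of 0^{(n)} or of 1^{(n)} of length < 2^n. Then γ_0 = γ_0', k = l, i_m = j_m for all 1 ≤ m ≤ k, and γ_1 = γ_1'; that is, for fixed n the expression of α in i^{(n)}-blocks is unique. -/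

import Mathlib

/-- One-sided Thue–Morse sequence: parity of the binary digit sum. -/
def tm (n : ℕ) : ℕ := (Nat.digits 2 n).sum % 2

/-- Two-sided Thue–Morse sequence `ω : ℤ → {0,1}`. -/
def tmZ (n : ℤ) : ℕ := if 0 ≤ n then tm n.toNat else tm (-n - 1).toNat

/-- The block `ω_[m, m+k-1]` of the two-sided Thue–Morse sequence. -/
def tmBlock (m : ℤ) (k : ℕ) : List ℕ := (List.range k).map fun j => tmZ (m + j)

/-- A (nonempty) word is a factor of the two-sided Thue–Morse sequence. -/
def IsFactor (α : List ℕ) : Prop := α ≠ [] ∧ ∃ m : ℤ, α = tmBlock m α.length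

/-- The words `i⁽ⁿ⁾`: `blk i 0 = [i]`, `blk i (n+1) = blk i n ++ blk (1-i) n`. -/
def blk : ℕ → ℕ → List ℕ
  | i, 0 => [i]
  | i, n + 1 => blk i n ++ blk (1 - i) n


theorem tm_lt (n : ℕ) : tm n < 2 := Nat.mod_lt _ (by norm_num)

theorem tm_even (n : ℕ) : tm (2 * n) = tm n := by
  rcases Nat.eq_zero_or_pos n with rfl | h
  · rfl
  · unfold tm
    rw [Nat.digits_def' (by norm_num) (by omega)]
    simp

theorem tm_odd (n : ℕ) : tm (2 * n + 1) = 1 - tm n := by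
  unfold tm
  rw [Nat.digits_def' (by norm_num) (by omega)]
  have h1 : (2 * n + 1) % 2 = 1 := by omega
  have h2 : (2 * n + 1) / 2 = n := by omega
  rw [h1, h2, List.sum_cons]
  omega

theorem tm_zero : tm 0 = 0 := by simp [tm]

theorem tm_add_pow (n : ℕ) : ∀ j, j < 2 ^ n → tm (2 ^ n + j) = 1 - tm j := by
  induction n with
  | zero =>
    intro j hj
    obtain rfl : j = 0 := by simpa using hj
    have := tm_odd 0
    simpa using this
  | succ n ih =>
    intro j hj
    rw [pow_succ] at hj ⊢
    obtain ⟨k, rfl | rfl⟩ : ∃ k, j = 2 * k ∨ j = 2 * k + 1 := ⟨j / 2, by omega⟩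
    · have e : 2 ^ n * 2 + 2 * k = 2 * (2 ^ n + k) := by ring
      rw [e, tm_even, tm_even, ih k (by omega)]
    · have e : 2 ^ n * 2 + (2 * k + 1) = 2 * (2 ^ n + k) + 1 := by ring
      rw [e, tm_odd, tm_odd, ih k (by omega)]

theorem blk_eq (n : ℕ) : ∀ i, i < 2 →
    blk i n = (List.range (2 ^ n)).map (fun j => (i + tm j) % 2) := by
  induction n with
  | zero =>
    intro i hi
    simp [blk, tm_zero]
    omega
  | succ n ih =>
    intro i hi
    rw [blk, ih i hi, ih (1 - i) (by omega), pow_succ, mul_two, List.range_add, List.map_append,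
      List.map_map]
    congr 1
    apply List.map_congr_left
    intro j hj
    have h := tm_add_pow n j (List.mem_range.1 hj)
    have := tm_lt j
    simp only [Function.comp, h]
    omega

theorem blk_length (i n : ℕ) : (blk i n).length = 2 ^ n := by
  induction n generalizing i with
  | zero => rfl
  | succ n ih => rw [blk, List.length_append, ih, ih, pow_succ, mul_two]

/-- Two-sided sequences, with the left half complemented when `c` is odd. -/
def WW (c : ℕ) (n : ℤ) : ℕ := if 0 ≤ n then tm n.toNat else (tm (-n - 1).toNat + c) % 2

theorem WW_lt (c : ℕ) (n : ℤ) : WW c n < 2 := by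
  unfold WW
  split_ifs
  · exact tm_lt _
  · omega

theorem WW_even (c : ℕ) (k : ℤ) : WW c (2 * k) = WW (c + 1) k := by
  unfold WW
  by_cases h : 0 ≤ k
  · rw [if_pos (by omega), if_pos h, ← tm_even k.toNat]
    congr 1; omega
  · rw [if_neg (by omega), if_neg h]
    have e : (-(2 * k) - 1).toNat = 2 * (-k - 1).toNat + 1 := by omega
    rw [e, tm_odd]
    have := tm_lt (-k - 1).toNat
    omega

theorem WW_odd (c : ℕ) (k : ℤ) : WW c (2 * k + 1) = 1 - WW c (2 * k) := by
  unfold WW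
  by_cases h : 0 ≤ k
  · rw [if_pos (by omega), if_pos (by omega)]
    have e : (2 * k + 1).toNat = 2 * k.toNat + 1 := by omega
    have e' : (2 * k).toNat = 2 * k.toNat := by omega
    rw [e, e', tm_odd, tm_even]
  · rw [if_neg (by omega), if_neg (by omega)]
    have e : (-(2 * k) - 1).toNat = 2 * (-k - 1).toNat + 1 := by omega
    have e' : (-(2 * k + 1) - 1).toNat = 2 * (-k - 1).toNat := by omega
    rw [e, e', tm_odd, tm_even]
    have := tm_lt (-k - 1).toNat
    omega

/-- No three equal consecutive letters. -/
theorem WW_no_cube (c : ℕ) (k : ℤ) (h1 : WW c (k - 1) = WW c k) (h2 : WW c k = WW c (k + 1)) :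
    False := by
  obtain ⟨q, rfl | rfl⟩ : ∃ q, k = 2 * q ∨ k = 2 * q + 1 := ⟨k / 2, by omega⟩
  · have := WW_odd c q
    have := WW_lt c (2 * q)
    omega
  · have := WW_odd c q
    have := WW_lt c (2 * q)
    rw [show 2 * q + 1 - 1 = 2 * q by ring] at h1
    omega

theorem WW_sync (n : ℕ) : ∀ (c : ℕ) (p : ℤ) (a b : ℕ),
    (∀ j : ℕ, j < 2 ^ n → WW c (p + j) = (a + tm j) % 2) →
    (∀ j : ℕ, j < 2 ^ n → WW c (p + 2 ^ n + j) = (b + tm j) % 2) → (2 ^ n : ℤ) ∣ p := by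
  induction n with
  | zero => intro c p a b _ _; simp
  | succ n ih =>
    intro c p a b ha hb
    have t0 := tm_zero
    have t1 : tm 1 = 1 := by simp [tm]
    have t2 : tm 2 = 1 := by simp [tm]
    have hev : ∃ q, p = 2 * q := by
      by_contra hne
      obtain ⟨q, rfl⟩ : ∃ q, p = 2 * q + 1 := ⟨p / 2, by
        by_contra h; exact hne ⟨p / 2, by omega⟩⟩
      have o0 := WW_odd c q
      have o1 := WW_odd c (q + 1)
      have o2 := WW_odd c (q + 2)
      have l0 := WW_lt c (2 * q)
      have l1 := WW_lt c (2 * (q + 1))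
      have l2 := WW_lt c (2 * (q + 2))
      rcases n with _ | n
      · have a0 := ha 0 (by norm_num)
        have a1 := ha 1 (by norm_num)
        have b0 := hb 0 (by norm_num)
        have b1 := hb 1 (by norm_num)
        rw [show (2 * q + 1 + ((0 : ℕ) : ℤ)) = 2 * q + 1 by push_cast; ring] at a0
        rw [show (2 * q + 1 + ((1 : ℕ) : ℤ)) = 2 * (q + 1) by push_cast; ring] at a1
        rw [show (2 * q + 1 + 2 ^ (0 + 1) + ((0 : ℕ) : ℤ)) = 2 * (q + 1) + 1 by
          push_cast; ring] at b0
        rw [show (2 * q + 1 + 2 ^ (0 + 1) + ((1 : ℕ) : ℤ)) = 2 * (q + 2) by push_cast; ring] at b1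
        refine WW_no_cube (c + 1) (q + 1) ?_ ?_
        · rw [show q + 1 - 1 = q by ring, ← WW_even, ← WW_even]
          omega
        · rw [show q + 1 + 1 = q + 2 by ring, ← WW_even, ← WW_even]
          omega
      · have hp : 0 < 2 ^ n := by positivity
        have a1 := ha 1 (by rw [pow_succ, pow_succ]; omega)
        have a2 := ha 2 (by rw [pow_succ, pow_succ]; omega)
        rw [show (2 * q + 1 + ((1 : ℕ) : ℤ)) = 2 * (q + 1) by push_cast; ring] at a1
        rw [show (2 * q + 1 + ((2 : ℕ) : ℤ)) = 2 * (q + 1) + 1 by push_cast; ring] at a2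
        omega
    obtain ⟨q, rfl⟩ := hev
    rw [pow_succ, mul_comm]
    apply mul_dvd_mul_left
    apply ih (c + 1) q a b
    · intro j hj
      rw [← WW_even, ← tm_even j, ← ha (2 * j) (by rw [pow_succ]; omega)]
      congr 1; push_cast; ring
    · intro j hj
      rw [← WW_even, ← tm_even j, ← hb (2 * j) (by rw [pow_succ]; omega)]
      congr 1; push_cast; ring

theorem tmZ_eq_WW (n : ℤ) : tmZ n = WW 0 n := by
  unfold tmZ WW
  split_ifs
  · rfl
  · have := tm_lt (-n - 1).toNat
    omega

theorem tmBlock_eq (m : ℤ) (k : ℕ) :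
    tmBlock m k = (List.range k).map fun j : ℕ => tmZ (m + (j : ℤ)) := by
  unfold tmBlock
  simp [List.map_flatMap]
  exact List.flatMap_pure_eq_map _ _

theorem parse_dvd (n : ℕ) (m : ℤ) (is γ₀ γ₁ : List ℕ) (k : ℕ)
    (his : 2 ≤ is.length) (his01 : ∀ i ∈ is, i = 0 ∨ i = 1)
    (h : tmBlock m k = γ₀ ++ (is.map fun i => blk i n).flatten ++ γ₁) :
    (2 ^ n : ℤ) ∣ m + γ₀.length := by
  match is, his with
  | a :: b :: r, _ =>
    have ha : a < 2 := by have := his01 a (by simp); omega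
    have hb : b < 2 := by have := his01 b (by simp); omega
    simp only [List.map_cons, List.flatten_cons, List.append_assoc] at h
    have key : ∀ (t : ℕ) (x : ℕ),
        (γ₀ ++ (blk a n ++ (blk b n ++ ((r.map fun i => blk i n).flatten ++ γ₁))))[t]? = some x →
        WW 0 (m + t) = x := by
      intro t x hx
      rw [← h, tmBlock_eq, List.getElem?_map, Option.map_eq_some_iff] at hx
      obtain ⟨y, hy, rfl⟩ := hx
      have hy' := List.getElem?_eq_some_iff.1 hy
      obtain ⟨_, hy2⟩ := hy'
      rw [List.getElem_range] at hy2
      rw [tmZ_eq_WW, hy2]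
    apply WW_sync n 0 _ a b
    · intro j hj
      have := key (γ₀.length + j) ((a + tm j) % 2) (by
        rw [List.getElem?_append_right (by omega), Nat.add_sub_cancel_left,
          List.getElem?_append_left (by rw [blk_length]; omega), blk_eq n a ha]
        simp [hj])
      rw [← this]; congr 1; push_cast; ring
    · intro j hj
      have := key (γ₀.length + (2 ^ n + j)) ((b + tm j) % 2) (by
        rw [List.getElem?_append_right (by omega), Nat.add_sub_cancel_left,
          List.getElem?_append_right (by rw [blk_length]; omega), blk_length,
          Nat.add_sub_cancel_left,
          List.getElem?_append_left (by rw [blk_length]; omega), blk_eq n b hb]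
        simp [hj])
      rw [← this]; congr 1; push_cast; ring

theorem blk_inj (n a b : ℕ) (ha : a < 2) (hb : b < 2) (h : blk a n = blk b n) : a = b := by
  rw [blk_eq n a ha, blk_eq n b hb, List.map_inj_left] at h
  have := h 0 (List.mem_range.2 (by positivity))
  rw [tm_zero] at this
  omega

theorem flatten_inj (n : ℕ) (γ γ' : List ℕ) (h : γ.length < 2 ^ n) (h' : γ'.length < 2 ^ n) :
    ∀ is js : List ℕ, (∀ i ∈ is, i = 0 ∨ i = 1) → (∀ i ∈ js, i = 0 ∨ i = 1) →
    (is.map fun i => blk i n).flatten ++ γ = (js.map fun i => blk i n).flatten ++ γ' →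
    is = js ∧ γ = γ' := by
  intro is
  induction is with
  | nil =>
    intro js _ _ e
    cases js with
    | nil => simpa using e
    | cons b s =>
      exfalso
      have := congrArg List.length e
      simp only [List.map_cons, List.flatten_cons, List.length_append, blk_length, List.map_nil,
        List.flatten_nil, List.length_nil] at this
      omega
  | cons a r ih =>
    intro js hi hj e
    cases js with
    | nil =>
      exfalso
      have := congrArg List.length e
      simp only [List.map_cons, List.flatten_cons, List.length_append, blk_length, List.map_nil,
        List.flatten_nil, List.length_nil] at this
      omega
    | cons b s =>
      simp only [List.map_cons, List.flatten_cons, List.append_assoc] at e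
      obtain ⟨e1, e2⟩ := List.append_inj e (by rw [blk_length, blk_length])
      have ha := hi a (by simp)
      have hb := hj b (by simp)
      have hab := blk_inj n a b (by omega) (by omega) e1
      obtain ⟨e3, e4⟩ := ih s (fun i hx => hi i (by simp [hx])) (fun i hx => hj i (by simp [hx])) e2
      exact ⟨by rw [hab, e3], e4⟩

/-- For a fixed `n`, the expression of a factor `α` (`|α| ≥ 2`) of the two-sided Thue–Morse
sequence in the form `γ₀ i₁⁽ⁿ⁾ ⋯ i_k⁽ⁿ⁾ γ₁` (with `2 ≤ k ≤ 4`, `γ₀` a suffix of `0⁽ⁿ⁾` or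
`1⁽ⁿ⁾` of length `< 2ⁿ`, `γ₁` a prefix of `0⁽ⁿ⁾` or `1⁽ⁿ⁾` of length `< 2ⁿ`) is unique. -/
theorem factor_blk_decomposition_unique (α : List ℕ) (hα : IsFactor α) (hlen : 2 ≤ α.length)
    (n : ℕ) (is js : List ℕ) (γ₀ γ₁ γ₀' γ₁' : List ℕ)
    (his : 2 ≤ is.length) (his' : is.length ≤ 4) (his01 : ∀ i ∈ is, i = 0 ∨ i = 1)
    (hjs : 2 ≤ js.length) (hjs' : js.length ≤ 4) (hjs01 : ∀ j ∈ js, j = 0 ∨ j = 1)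
    (hγ₀ : γ₀.length < 2 ^ n) (hγ₀s : γ₀ <:+ blk 0 n ∨ γ₀ <:+ blk 1 n)
    (hγ₁ : γ₁.length < 2 ^ n) (hγ₁p : γ₁ <+: blk 0 n ∨ γ₁ <+: blk 1 n)
    (hγ₀' : γ₀'.length < 2 ^ n) (hγ₀s' : γ₀' <:+ blk 0 n ∨ γ₀' <:+ blk 1 n)
    (hγ₁' : γ₁'.length < 2 ^ n) (hγ₁p' : γ₁' <+: blk 0 n ∨ γ₁' <+: blk 1 n)
    (h1 : α = γ₀ ++ (is.map fun i => blk i n).flatten ++ γ₁)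
    (h2 : α = γ₀' ++ (js.map fun j => blk j n).flatten ++ γ₁') :
    γ₀ = γ₀' ∧ is = js ∧ γ₁ = γ₁' := by
  obtain ⟨_, m, hm⟩ := hα
  have d1 := parse_dvd n m is γ₀ γ₁ _ his his01 (hm.symm.trans h1)
  have d2 := parse_dvd n m js γ₀' γ₁' _ hjs hjs01 (hm.symm.trans h2)
  have hl : γ₀.length = γ₀'.length := by
    have d := dvd_sub d1 d2
    rw [add_sub_add_left_eq_sub] at d
    have hz := Int.eq_zero_of_abs_lt_dvd d (by
      have h3 : (γ₀.length : ℤ) < 2 ^ n := by exact_mod_cast hγ₀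
      have h4 : (γ₀'.length : ℤ) < 2 ^ n := by exact_mod_cast hγ₀'
      rw [abs_lt]
      constructor <;> omega)
    omega
  have e := h1.symm.trans h2
  rw [List.append_assoc, List.append_assoc] at e
  obtain ⟨e1, e2⟩ := List.append_inj e hl
  exact ⟨e1, flatten_inj n γ₁ γ₁' hγ₁ hγ₁' is js his01 hjs01 e2⟩
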